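/- Let p be a prime, let m, n be positive integers, and set d = gcd(m, n), q = p^{mn/d}, α = (q−1)/(p^n−1), β = (q−1)/(p^m−1). Then the number of pairs (i, j) of natural numbers with 0 ≤ iα ≤ jβ ≤ q−1 and C(jβ, iα) ≢ 0 (mod p) equals (Σ_{i=0}^{p−1} ((i+1)^{m/d} − i^{m/d})(p−i)^{n/d})^d. -/

import Mathlib

/-!
If `n ∣ L` and `i < p ^ n`, then `i * ((p ^ L - 1) / (p ^ n - 1))` repeats the `n` base-`p` digits
of `i` until `L` digits are filled. With `L = lcm m n`, Lucas' theorem turns `p ∤ C(jβ, iα)` into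
digitwise inequalities, and by the Chinese remainder theorem these say that digit `x` of `i` is at
most digit `y` of `j` whenever `x ≡ y` modulo `d = gcd m n`. The `d` residue classes decouple; each
involves `n / d` digits of `i`, all bounded by each of `m / d` digits of `j`, and sorting by the
minimum of the latter counts the choices in one class.
-/

section FunctionPairs

open Finset

variable {ι κ α β : Type*} [Fintype ι] [Fintype κ] [Fintype α] [Fintype β]
  [DecidableEq ι] [DecidableEq κ]

lemma card_filter_inf'_eq [LinearOrder α] [LocallyFiniteOrderTop α] [Nonempty κ] (c : α) :
    #{v : κ → α | univ.inf' univ_nonempty v = c} =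
      #(Ici c) ^ Fintype.card κ - #(Ioi c) ^ Fintype.card κ := by
  have filter_eq_sdiff : ({v | univ.inf' univ_nonempty v = c} : Finset (κ → α)) =
      Fintype.piFinset (fun _ ↦ Ici c) \ Fintype.piFinset (fun _ ↦ Ioi c) := by
    ext v
    rw [mem_filter, eq_comm, le_antisymm_iff, ← not_lt (a := c), le_inf'_iff, lt_inf'_iff]
    simp
  rw [filter_eq_sdiff,
    card_sdiff_of_subset (Fintype.piFinset_subset _ _ fun _ ↦ Ioi_subset_Ici_self),
    Fintype.card_piFinset, Fintype.card_piFinset, prod_const, prod_const, card_univ]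

lemma card_filter_forall_le [LinearOrder α] [LocallyFiniteOrderTop α] [LocallyFiniteOrderBot α]
    [Nonempty κ] :
    #{uv : (ι → α) × (κ → α) | ∀ x y, uv.1 x ≤ uv.2 y} =
      ∑ c : α, #(Iic c) ^ Fintype.card ι *
        (#(Ici c) ^ Fintype.card κ - #(Ioi c) ^ Fintype.card κ) := by
  rw [card_eq_sum_card_fiberwise (f := fun uv ↦ univ.inf' univ_nonempty uv.2) (t := univ)
    fun _ _ ↦ mem_coe.2 (mem_univ _)]
  refine sum_congr rfl fun c _ ↦ ?_
  have fiber_eq_product :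
      ({uv ∈ {uv : (ι → α) × (κ → α) | ∀ x y, uv.1 x ≤ uv.2 y} |
        univ.inf' univ_nonempty uv.2 = c} : Finset ((ι → α) × (κ → α))) =
      Fintype.piFinset (fun _ ↦ Iic c) ×ˢ
        ({v | univ.inf' univ_nonempty v = c} : Finset (κ → α)) := by
    ext ⟨u, v⟩
    simp only [mem_filter, mem_univ, true_and, mem_product, Fintype.mem_piFinset, mem_Iic]
    refine and_congr_left fun hc ↦ forall_congr' fun x ↦ ?_
    rw [← hc, le_inf'_iff]
    simp
  rw [fiber_eq_product, card_product, Fintype.card_piFinset, prod_const, card_univ,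
    card_filter_inf'_eq]

lemma card_filter_forall_fin_le [Nonempty κ] (p : ℕ) :
    #{uv : (ι → Fin p) × (κ → Fin p) | ∀ x y, uv.1 x ≤ uv.2 y} =
      ∑ i ∈ range p,
        ((i + 1) ^ Fintype.card κ - i ^ Fintype.card κ) * (p - i) ^ Fintype.card ι := by
  rw [card_filter_forall_le, ← Equiv.sum_comp Fin.revPerm, ← Fin.sum_univ_eq_sum_range
    fun i ↦ ((i + 1) ^ Fintype.card κ - i ^ Fintype.card κ) * (p - i) ^ Fintype.card ι]
  refine sum_congr rfl fun i _ ↦ ?_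
  have card_Iic : #(Iic i.rev) = p - i := by rw [Fin.card_Iic, Fin.val_rev]; omega
  have card_Ici : #(Ici i.rev) = i + 1 := by rw [Fin.card_Ici, Fin.val_rev]; omega
  have card_Ioi : #(Ioi i.rev) = i := by rw [Fin.card_Ioi, Fin.val_rev]; omega
  rw [Fin.revPerm_apply, card_Iic, card_Ici, card_Ioi, mul_comm]

lemma card_filter_forall_eq_imp {δ : Type*} [Fintype δ] [DecidableEq δ]
    (f : ι → δ) (g : κ → δ) (r : α → β → Prop) [DecidableRel r] :
    #{uv : (ι → α) × (κ → β) | ∀ x y, f x = g y → r (uv.1 x) (uv.2 y)} =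
      ∏ k, #{uv : ({x // f x = k} → α) × ({y // g y = k} → β) |
        ∀ x y, r (uv.1 x) (uv.2 y)} := by
  rw [← Fintype.card_piFinset]
  refine card_nbij' (fun uv k ↦ (fun x ↦ uv.1 x, fun y ↦ uv.2 y))
    (fun w ↦ (fun x ↦ (w (f x)).1 ⟨x, rfl⟩, fun y ↦ (w (g y)).2 ⟨y, rfl⟩)) ?_ ?_ ?_ ?_
  · intro uv huv
    rw [mem_coe, mem_filter_univ] at huv
    simp only [mem_coe, Fintype.mem_piFinset, mem_filter_univ]
    exact fun k x y ↦ huv x y (x.2.trans y.2.symm)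
  · intro w hw
    simp only [mem_coe, Fintype.mem_piFinset, mem_filter_univ] at hw
    rw [mem_coe, mem_filter_univ]
    intro x y hxy
    have fst_eq : ∀ k (hk : f x = k), (w k).1 ⟨x, hk⟩ = (w (f x)).1 ⟨x, rfl⟩ := by
      rintro _ rfl
      rfl
    rw [← fst_eq _ hxy]
    exact hw _ _ _
  · exact fun _ _ ↦ rfl
  · intro w _
    ext k ⟨_, rfl⟩ <;> rfl

end FunctionPairs

section ResidueClasses

open Finset

lemma card_fin_natCast_eq {n d : ℕ} [NeZero d] (hdn : d ∣ n) (k : ZMod d) :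
    Fintype.card {x : Fin n // ((x : ℕ) : ZMod d) = k} = n / d := by
  calc Fintype.card {x : Fin n // ((x : ℕ) : ZMod d) = k}
      = n.count (· ≡ k.val [MOD d]) := by
        simp only [← ZMod.natCast_eq_natCast_iff, ZMod.natCast_zmod_val]
        rw [Fintype.card_subtype, Nat.count_eq_card_filter_range, ← Nat.Iio_eq_range,
          ← Fin.map_valEmbedding_univ, filter_map, card_map]
        rfl
    _ = n / d := by
        rw [Nat.count_modEq_card _ (NeZero.pos d), Nat.mod_eq_zero_of_dvd hdn,
          if_neg (Nat.not_lt_zero _), add_zero]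

lemma card_filter_class_forall_le {m n d : ℕ} [NeZero d] (p : ℕ) (hm : m ≠ 0) (hdm : d ∣ m)
    (hdn : d ∣ n) (k : ZMod d) :
    #{uv : ({x : Fin n // ((x : ℕ) : ZMod d) = k} → Fin p) ×
        ({y : Fin m // ((y : ℕ) : ZMod d) = k} → Fin p) | ∀ x y, uv.1 x ≤ uv.2 y} =
      ∑ i ∈ range p, ((i + 1) ^ (m / d) - i ^ (m / d)) * (p - i) ^ (n / d) := by
  have : Nonempty {y : Fin m // ((y : ℕ) : ZMod d) = k} := by
    rw [← Fintype.card_pos_iff, card_fin_natCast_eq hdm]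
    exact Nat.div_pos (Nat.le_of_dvd (Nat.pos_of_ne_zero hm) hdm) (NeZero.pos d)
  rw [card_filter_forall_fin_le, card_fin_natCast_eq hdm, card_fin_natCast_eq hdn]

lemma card_filter_forall_modEq_imp_le {m n d : ℕ} (p : ℕ) (hm : m ≠ 0)
    (hdm : d ∣ m) (hdn : d ∣ n) :
    #{uv : (Fin n → Fin p) × (Fin m → Fin p) |
        ∀ (x : Fin n) (y : Fin m), x ≡ y [MOD d] → uv.1 x ≤ uv.2 y} =
      (∑ i ∈ range p, ((i + 1) ^ (m / d) - i ^ (m / d)) * (p - i) ^ (n / d)) ^ d := by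
  have : NeZero d := ⟨ne_zero_of_dvd_ne_zero hm hdm⟩
  have split_classes := card_filter_forall_eq_imp (fun x : Fin n ↦ ((x : ℕ) : ZMod d))
    (fun y : Fin m ↦ ((y : ℕ) : ZMod d)) (fun u v : Fin p ↦ u ≤ v)
  simp only [ZMod.natCast_eq_natCast_iff] at split_classes
  rw [split_classes, prod_congr rfl fun k _ ↦ card_filter_class_forall_le p hm hdm hdn k,
    prod_const, card_univ, ZMod.card]

lemma forall_lt_lcm_mod_iff {m n : ℕ} (hm : m ≠ 0) (hn : n ≠ 0) (r : ℕ → ℕ → Prop) :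
    (∀ k < Nat.lcm m n, r (k % m) (k % n)) ↔
      ∀ (x : Fin m) (y : Fin n), x ≡ y [MOD Nat.gcd m n] → r x y := by
  constructor
  · intro h x y hxy
    obtain ⟨hx, hy⟩ := (Nat.chineseRemainder' hxy).2
    have hr := h _ (Nat.chineseRemainder'_lt_lcm hxy hm hn)
    rwa [hx, hy, Nat.mod_eq_of_lt x.isLt, Nat.mod_eq_of_lt y.isLt] at hr
  · intro h k _
    refine h ⟨k % m, Nat.mod_lt k (Nat.pos_of_ne_zero hm)⟩
      ⟨k % n, Nat.mod_lt k (Nat.pos_of_ne_zero hn)⟩ ?_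
    exact ((Nat.mod_modEq k m).of_dvd (Nat.gcd_dvd_left m n)).trans
      ((Nat.mod_modEq k n).of_dvd (Nat.gcd_dvd_right m n)).symm

end ResidueClasses

section Digits

open Finset

lemma card_filter_digits {m n : ℕ} (p : ℕ) (r : (Fin n → ℕ) → (Fin m → ℕ) → Prop)
    [∀ u v, Decidable (r u v)] :
    #{ij ∈ range (p ^ n) ×ˢ range (p ^ m) |
        r (fun x ↦ ij.1 / p ^ (x : ℕ) % p) (fun y ↦ ij.2 / p ^ (y : ℕ) % p)} =
      #{uv : (Fin n → Fin p) × (Fin m → Fin p) | r (fun x ↦ uv.1 x) (fun y ↦ uv.2 y)} := by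
  have range_eq_map (N : ℕ) : range N = univ.map (Fin.valEmbedding (n := N)) := by
    rw [Fin.map_valEmbedding_univ, Nat.Iio_eq_range]
  rw [range_eq_map, range_eq_map, ← prodMap_map_product, filter_map, card_map]
  refine card_equiv (finFunctionFinEquiv.symm.prodCongr finFunctionFinEquiv.symm) fun ij ↦ ?_
  simp [finFunctionFinEquiv_symm_apply_val]

lemma le_of_not_dvd_choose {p a b : ℕ} (h : ¬ p ∣ a.choose b) : b ≤ a :=
  not_lt.1 fun hab ↦ h (Nat.choose_eq_zero_of_lt hab ▸ dvd_zero p)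

lemma not_dvd_choose_iff_forall_digit_le {p N a b : ℕ} (hp : p.Prime) (ha : a < p ^ N)
    (hb : b < p ^ N) :
    ¬ p ∣ a.choose b ↔ ∀ k < N, b / p ^ k % p ≤ a / p ^ k % p := by
  have := Fact.mk hp
  rw [(Choose.choose_modEq_prod_range_choose_nat ha hb).dvd_iff dvd_rfl,
    hp.prime.dvd_finsetProd_iff]
  push Not
  simp only [mem_range]
  refine forall₂_congr fun k _ ↦ ⟨le_of_not_dvd_choose, fun hle ↦ ?_⟩
  exact hp.coprime_iff_not_dvd.1 (hp.coprime_choose_of_lt (Nat.mod_lt _ hp.pos) hle)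

lemma mul_geom_sum_digit {b n i c k : ℕ} (hi : i < b ^ n) (hk : k < n * c) :
    (i * ∑ t ∈ range c, (b ^ n) ^ t) / b ^ k % b = i / b ^ (k % n) % b := by
  have hn : n ≠ 0 := by rintro rfl; simp at hk
  have hb : 0 < b := Nat.pos_of_ne_zero fun hb ↦ by simp [hb, hn] at hi
  induction c generalizing k with
  | zero => simp at hk
  | succ c ih =>
    have peel : i * ∑ t ∈ range (c + 1), (b ^ n) ^ t =
        i + b ^ n * (i * ∑ t ∈ range c, (b ^ n) ^ t) := by
      rw [geom_sum_succ]
      ring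
    rw [peel]
    rcases lt_or_ge k n with hkn | hnk
    · obtain ⟨r, rfl⟩ := Nat.exists_eq_add_of_lt hkn
      rw [Nat.mod_eq_of_lt hkn, add_assoc, pow_add, mul_assoc,
        Nat.add_mul_div_left _ _ (pow_pos hb k), pow_succ', mul_assoc, Nat.add_mul_mod_self_left]
    · obtain ⟨r, rfl⟩ := Nat.exists_eq_add_of_le hnk
      rw [pow_add, ← Nat.div_div_eq_div_mul, Nat.add_mul_div_left _ _ (pow_pos hb n),
        Nat.div_eq_of_lt hi, zero_add, ih (by linarith), Nat.add_mod_left]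

/-- The generalized repunit whose `L` base-`b` digits are `1` exactly at the multiples of `n`; the
closed form has this meaning when `1 < b`, `0 < n` and `n ∣ L`. -/
def repunit (b n L : ℕ) : ℕ := (b ^ L - 1) / (b ^ n - 1)

lemma mul_repunit_digit {b n L i k : ℕ} (hb : 1 < b) (hnL : n ∣ L) (hi : i < b ^ n) (hk : k < L) :
    i * repunit b n L / b ^ k % b = i / b ^ (k % n) % b := by
  obtain ⟨c, rfl⟩ := hnL
  have hn : n ≠ 0 := by rintro rfl; simp at hk
  rw [repunit, pow_mul, ← Nat.geomSum_eq (Nat.one_lt_pow hn hb), mul_geom_sum_digit hi hk]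

lemma repunit_pos {b n L : ℕ} (hb : 1 < b) (hn : n ≠ 0) (hL : L ≠ 0) (hnL : n ∣ L) :
    0 < repunit b n L :=
  Nat.div_pos (Nat.sub_le_sub_right
    (Nat.pow_le_pow_right hb.le (Nat.le_of_dvd (Nat.pos_of_ne_zero hL) hnL)) 1)
    (Nat.sub_pos_of_lt (Nat.one_lt_pow hn hb))

lemma mul_repunit_le_iff {b n L i : ℕ} (hb : 1 < b) (hn : n ≠ 0) (hL : L ≠ 0) (hnL : n ∣ L) :
    i * repunit b n L ≤ b ^ L - 1 ↔ i < b ^ n := by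
  have hmul : (b ^ n - 1) * repunit b n L = b ^ L - 1 :=
    Nat.mul_div_cancel' (Nat.pow_sub_one_dvd_pow_sub_one b hnL)
  rw [← hmul, Nat.mul_le_mul_right_iff (repunit_pos hb hn hL hnL),
    Nat.le_sub_one_iff_lt (pow_pos (one_pos.trans hb) n)]

lemma not_dvd_choose_mul_repunit_iff {p m n i j : ℕ} (hp : p.Prime) (hm : m ≠ 0) (hn : n ≠ 0)
    (hi : i < p ^ n) (hj : j < p ^ m) :
    ¬ p ∣ (j * repunit p m (Nat.lcm m n)).choose (i * repunit p n (Nat.lcm m n)) ↔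
      ∀ (x : Fin n) (y : Fin m), x ≡ y [MOD Nat.gcd m n] →
        i / p ^ (x : ℕ) % p ≤ j / p ^ (y : ℕ) % p := by
  have hL := Nat.lcm_ne_zero hm hn
  have hmL := Nat.dvd_lcm_left m n
  have hnL := Nat.dvd_lcm_right m n
  have hjβ := (mul_repunit_le_iff hp.one_lt hm hL hmL).2 hj
  have hiα := (mul_repunit_le_iff hp.one_lt hn hL hnL).2 hi
  have hq : 0 < p ^ Nat.lcm m n := pow_pos hp.pos _
  rw [not_dvd_choose_iff_forall_digit_le hp (Nat.lt_of_le_sub_one hq hjβ)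
      (Nat.lt_of_le_sub_one hq hiα), Nat.gcd_comm,
    ← forall_lt_lcm_mod_iff hn hm fun x y ↦ i / p ^ x % p ≤ j / p ^ y % p, Nat.lcm_comm n m]
  refine forall₂_congr fun k hk ↦ ?_
  rw [mul_repunit_digit hp.one_lt hnL hi hk, mul_repunit_digit hp.one_lt hmL hj hk]

lemma filter_not_dvd_choose_mul_repunit {p m n : ℕ} (hp : p.Prime) (hm : m ≠ 0) (hn : n ≠ 0) :
    {ij ∈ range (p ^ Nat.lcm m n) ×ˢ range (p ^ Nat.lcm m n) |
      ij.1 * repunit p n (Nat.lcm m n) ≤ ij.2 * repunit p m (Nat.lcm m n) ∧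
      ij.2 * repunit p m (Nat.lcm m n) ≤ p ^ Nat.lcm m n - 1 ∧
      ¬ p ∣ (ij.2 * repunit p m (Nat.lcm m n)).choose (ij.1 * repunit p n (Nat.lcm m n))} =
    {ij ∈ range (p ^ n) ×ˢ range (p ^ m) |
      ∀ (x : Fin n) (y : Fin m), x ≡ y [MOD Nat.gcd m n] →
        ij.1 / p ^ (x : ℕ) % p ≤ ij.2 / p ^ (y : ℕ) % p} := by
  have hL := Nat.lcm_ne_zero hm hn
  have le_iff_i (i : ℕ) := mul_repunit_le_iff (i := i) hp.one_lt hn hL (Nat.dvd_lcm_right m n)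
  have le_iff_j (j : ℕ) := mul_repunit_le_iff (i := j) hp.one_lt hm hL (Nat.dvd_lcm_left m n)
  have pow_le {l : ℕ} (hl : l ∣ Nat.lcm m n) : p ^ l ≤ p ^ Nat.lcm m n :=
    Nat.pow_le_pow_right hp.pos (Nat.le_of_dvd (Nat.pos_of_ne_zero hL) hl)
  ext ⟨i, j⟩
  simp only [mem_filter, mem_product, mem_range]
  constructor
  · rintro ⟨-, hij, hj, hndvd⟩
    have hi' := (le_iff_i i).1 (hij.trans hj)
    have hj' := (le_iff_j j).1 hj
    exact ⟨⟨hi', hj'⟩, (not_dvd_choose_mul_repunit_iff hp hm hn hi' hj').1 hndvd⟩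
  · rintro ⟨⟨hi, hj⟩, hdigits⟩
    have hndvd := (not_dvd_choose_mul_repunit_iff hp hm hn hi hj).2 hdigits
    refine ⟨⟨hi.trans_le (pow_le (Nat.dvd_lcm_right m n)),
      hj.trans_le (pow_le (Nat.dvd_lcm_left m n))⟩,
      le_of_not_dvd_choose hndvd, (le_iff_j j).2 hj, hndvd⟩

end Digits

/-- Theorem 4.5 (`+formulas-thm1`), counting part: with `d = gcd(m,n)`, `q = p^(mn/d)`,
`α = (q−1)/(pⁿ−1)`, `β = (q−1)/(pᵐ−1)`, the number of pairs `(i, j)` with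
`iα ≤ jβ ≤ q−1` and `p ∤ C(jβ, iα)` equals
`(Σ_{i=0}^{p−1} ((i+1)^(m/d) − i^(m/d))(p−i)^(n/d))^d`. -/
theorem stmt_14 (p m n : ℕ) (hp : p.Prime) (hm : 0 < m) (hn : 0 < n)
    (d q α β : ℕ) (hd : d = Nat.gcd m n) (hq : q = p ^ (m * n / d))
    (hα : α = (q - 1) / (p ^ n - 1)) (hβ : β = (q - 1) / (p ^ m - 1)) :
    ((Finset.range q ×ˢ Finset.range q).filter
      (fun ij : ℕ × ℕ => ij.1 * α ≤ ij.2 * β ∧ ij.2 * β ≤ q - 1 ∧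
        ¬ p ∣ Nat.choose (ij.2 * β) (ij.1 * α))).card
    = (∑ i ∈ Finset.range p, ((i + 1) ^ (m / d) - i ^ (m / d)) * (p - i) ^ (n / d)) ^ d := by
  have hqL : q = p ^ Nat.lcm m n := by rw [hq, hd, Nat.lcm]
  have hα' : α = repunit p n (Nat.lcm m n) := by rw [hα, hqL, repunit]
  have hβ' : β = repunit p m (Nat.lcm m n) := by rw [hβ, hqL, repunit]
  rw [hqL, hα', hβ', filter_not_dvd_choose_mul_repunit hp hm.ne' hn.ne', ← hd,
    card_filter_digits p fun u v ↦
      ∀ (x : Fin n) (y : Fin m), x ≡ y [MOD d] → u x ≤ v y]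
  exact card_filter_forall_modEq_imp_le p hm.ne'
    (hd ▸ Nat.gcd_dvd_left m n) (hd ▸ Nat.gcd_dvd_right m n)
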